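/- Let β ∈ (0,1), ν ≥ 0, ω ∈ ℝ and t > 0. Then ∫_0^t e^{−ν u} u^{β−1} M_{β,β}(ω u^β) du = e^{−ν t} Σ_{m=0}^∞ ν^m t^{β+m} M_{β, β+m+1}(ω t^β), where both the integral and the series converge absolutely. -/

import Mathlib

open MeasureTheory intervalIntegral

/-- The two-parameter Mittag-Leffler function `M_{a,b}(z) = Σ_{n=0}^∞ z^n / Γ(a n + b)`
(the three-parameter function `M_{a,b}^c` with `c = 1`). -/
noncomputable def ML (a b z : ℝ) : ℝ :=
  ∑' n : ℕ, z ^ n / Real.Gamma (a * n + b)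

/-! Write `e^{-νu} = e^{-νt} e^{ν(t-u)}` and expand the second factor in powers of `t - u`. The
`m`-th term is then `ν^m` times the Riemann-Liouville integral of order `m + 1` of
`u ↦ u^{b-1} M_{a,b}(ω u^a)`. By Euler's beta integral, applied to each term of the power series,
the Riemann-Liouville integral of order `s` of this function is `t^{b+s-1} M_{a,b+s}(ω t^a)`.
Both exchanges of sum and integral are instances of the Weierstrass test with an integrable
weight. -/

section TermwiseIntegration

open scoped Interval

variable {E : Type*} [NormedAddCommGroup E] [NormedSpace ℝ E] {μ : Measure ℝ} {x y : ℝ} {g : ℝ → E}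

lemma hasSum_intervalIntegral_smul_of_norm_le {ι : Type*} [Countable ι] {c : ι → ℝ → ℝ}
    {B : ι → ℝ} (hB : Summable B) (hc : ∀ i, AEStronglyMeasurable (c i) (μ.restrict (Ι x y)))
    (hcB : ∀ i, ∀ u ∈ Ι x y, ‖c i u‖ ≤ B i) (hg : IntervalIntegrable g μ x y) :
    HasSum (fun i ↦ ∫ u in x..y, c i u • g u ∂μ) (∫ u in x..y, (∑' i, c i u) • g u ∂μ) := by
  refine hasSum_integral_of_dominated_convergence (fun i u ↦ B i * ‖g u‖)
    (fun i ↦ (hc i).smul hg.def'.aestronglyMeasurable) (fun i ↦ .of_forall fun u hu ↦ ?_)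
    (.of_forall fun u _ ↦ hB.mul_right _) ?_ (.of_forall fun u hu ↦ ?_)
  · rw [norm_smul]
    exact mul_le_mul_of_nonneg_right (hcB i u hu) (norm_nonneg _)
  · simp only [tsum_mul_right]
    exact hg.norm.const_mul _
  · exact (hB.of_norm_bounded fun i ↦ hcB i u hu).hasSum.smul_const _

lemma hasSum_intervalIntegral_pow_div_factorial_smul {φ : ℝ → ℝ}
    (hφ : ContinuousOn φ [[x, y]]) (hg : IntervalIntegrable g μ x y) :
    HasSum (fun m : ℕ ↦ ∫ u in x..y, (φ u ^ m / m.factorial) • g u ∂μ)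
      (∫ u in x..y, Real.exp (φ u) • g u ∂μ) := by
  obtain ⟨C, hC⟩ := isCompact_uIcc.exists_bound_of_continuousOn hφ
  have hexp (u : ℝ) : Real.exp (φ u) = ∑' m : ℕ, φ u ^ m / m.factorial := by
    rw [Real.exp_eq_exp_ℝ, NormedSpace.exp_eq_tsum_div]
  simp only [hexp]
  refine hasSum_intervalIntegral_smul_of_norm_le (Real.summable_pow_div_factorial C)
    (fun m ↦ ?_) (fun m u hu ↦ ?_) hg
  · exact (((hφ.mono Set.uIoc_subset_uIcc).pow m).div_const _).aestronglyMeasurable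
      measurableSet_uIoc
  · rw [norm_div, norm_pow, Real.norm_natCast]
    gcongr
    exact hC u (Set.uIoc_subset_uIcc hu)

end TermwiseIntegration

section BetaIntegral

variable {p q t : ℝ}

lemma integral_rpow_mul_sub_rpow (hp : 0 < p) (hq : 0 < q) (ht : 0 < t) :
    ∫ u in (0 : ℝ)..t, u ^ (p - 1) * (t - u) ^ (q - 1) =
      t ^ (p + q - 1) * (Real.Gamma p * Real.Gamma q / Real.Gamma (p + q)) := by
  apply Complex.ofReal_injective
  have hcast : ∀ u ∈ Set.uIcc 0 t, ((u ^ (p - 1) * (t - u) ^ (q - 1) : ℝ) : ℂ) =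
      (u : ℂ) ^ ((p : ℂ) - 1) * ((t : ℂ) - u) ^ ((q : ℂ) - 1) := by
    intro u hu
    rw [Set.uIcc_of_le ht.le] at hu
    push_cast [Complex.ofReal_cpow hu.1, Complex.ofReal_cpow (sub_nonneg.2 hu.2)]
    rfl
  rw [← intervalIntegral.integral_ofReal, integral_congr hcast, Complex.betaIntegral_scaled _ _ ht,
    Complex.betaIntegral_eq_Gamma_mul_div _ _ (by simpa using hp) (by simpa using hq)]
  push_cast [Complex.ofReal_cpow ht.le, ← Complex.Gamma_ofReal]
  rfl

lemma intervalIntegrable_rpow_mul_sub_rpow (hp : 0 < p) (hq : 0 < q) (ht : 0 < t) :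
    IntervalIntegrable (fun u : ℝ ↦ u ^ (p - 1) * (t - u) ^ (q - 1)) volume 0 t := by
  -- Nonintegrable functions have integral `0` by convention.
  refine intervalIntegrable_of_integral_ne_zero ?_
  rw [integral_rpow_mul_sub_rpow hp hq ht]
  have := Real.Gamma_pos_of_pos hp
  have := Real.Gamma_pos_of_pos hq
  have := Real.Gamma_pos_of_pos (add_pos hp hq)
  positivity

end BetaIntegral

section MittagLeffler

lemma rpow_mul_exp_neg_le_Gamma {x R : ℝ} (hx : 1 ≤ x) (hR : 0 ≤ R) :
    R ^ (x - 1) * Real.exp (-R) ≤ Real.Gamma x := by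
  have hx0 : 0 < x := by linarith
  have hΓ := Real.GammaIntegral_convergent hx0
  have hsub : Set.Ioi R ⊆ Set.Ioi 0 := Set.Ioi_subset_Ioi hR
  calc R ^ (x - 1) * Real.exp (-R)
      = ∫ u in Set.Ioi R, Real.exp (-u) * R ^ (x - 1) := by
        rw [MeasureTheory.integral_mul_const, integral_exp_neg_Ioi, mul_comm]
    _ ≤ ∫ u in Set.Ioi R, Real.exp (-u) * u ^ (x - 1) := by
        refine setIntegral_mono_on ((integrableOn_exp_neg_Ioi R).mul_const _) (hΓ.mono_set hsub)
          measurableSet_Ioi fun u hu ↦ ?_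
        have hRu : R ≤ u := le_of_lt hu
        gcongr
    _ ≤ ∫ u in Set.Ioi 0, Real.exp (-u) * u ^ (x - 1) := by
        refine setIntegral_mono_set hΓ ?_ (.of_forall hsub)
        filter_upwards [ae_restrict_mem measurableSet_Ioi] with u hu
        exact mul_nonneg (Real.exp_nonneg _) (Real.rpow_nonneg (le_of_lt hu) _)
    _ = Real.Gamma x := (Real.Gamma_eq_integral hx0).symm

variable {a b t : ℝ}

lemma summable_pow_div_Gamma (ha : 0 < a) (b z : ℝ) :
    Summable fun n : ℕ ↦ z ^ n / Real.Gamma (a * n + b) := by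
  -- With `R ^ a = |z| + 1`, the terms are dominated by a geometric series.
  set q : ℝ := |z| + 1
  have hq : 0 < q := by positivity
  obtain ⟨R, hR, hRa⟩ : ∃ R : ℝ, 0 < R ∧ R ^ a = q :=
    ⟨q ^ a⁻¹, by positivity, Real.rpow_inv_rpow hq.le ha.ne'⟩
  have hgeom : Summable fun n : ℕ ↦ (|z| / q) ^ n * (R ^ (b - 1) * Real.exp (-R))⁻¹ :=
    (summable_geometric_of_lt_one (by positivity) ((div_lt_one hq).2 (lt_add_one _))).mul_right _
  refine hgeom.of_norm_bounded_eventually_nat ?_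
  have hlarge : ∀ᶠ n : ℕ in Filter.atTop, 1 ≤ a * n + b :=
    (Filter.tendsto_atTop_add_const_right _ b
      (tendsto_natCast_atTop_atTop.const_mul_atTop ha)).eventually_ge_atTop 1
  filter_upwards [hlarge] with n hn
  have hpow : R ^ (a * n + b - 1) = q ^ n * R ^ (b - 1) := by
    rw [add_sub_assoc, Real.rpow_add hR, Real.rpow_mul hR.le, hRa, Real.rpow_natCast]
  calc ‖z ^ n / Real.Gamma (a * n + b)‖ = |z| ^ n / Real.Gamma (a * n + b) := by
        rw [norm_div, norm_pow, Real.norm_eq_abs,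
          Real.norm_of_nonneg (Real.Gamma_pos_of_pos (by linarith)).le]
    _ ≤ |z| ^ n / (R ^ (a * n + b - 1) * Real.exp (-R)) := by
        gcongr
        exact rpow_mul_exp_neg_le_Gamma hn hR.le
    _ = (|z| / q) ^ n * (R ^ (b - 1) * Real.exp (-R))⁻¹ := by
        rw [hpow, div_pow, mul_assoc, ← div_div, div_eq_mul_inv]

lemma norm_pow_div_Gamma_le {z w : ℝ} (h : |z| ≤ |w|) (a b : ℝ) (n : ℕ) :
    ‖z ^ n / Real.Gamma (a * n + b)‖ ≤ ‖w ^ n / Real.Gamma (a * n + b)‖ := by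
  simp only [norm_div, norm_pow, Real.norm_eq_abs]
  gcongr

lemma continuous_ML (ha : 0 < a) (b : ℝ) : Continuous (ML a b) := by
  refine continuous_iff_continuousAt.2 fun z ↦ ?_
  have hball : ContinuousOn (ML a b) (Metric.ball 0 (|z| + 1)) := by
    refine continuousOn_tsum (fun n ↦ by fun_prop)
      (summable_pow_div_Gamma ha b (|z| + 1)).norm fun n w hw ↦ ?_
    exact norm_pow_div_Gamma_le ((mem_ball_zero_iff.1 hw).le.trans (le_abs_self _)) a b n
  exact hball.continuousAt (Metric.isOpen_ball.mem_nhds (by simp))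

lemma intervalIntegrable_rpow_mul_ML (ha : 0 < a) (hb : 0 < b) (ω x y : ℝ) :
    IntervalIntegrable (fun u ↦ u ^ (b - 1) * ML a b (ω * u ^ a)) volume x y := by
  refine (intervalIntegrable_rpow' (by linarith)).mul_continuousOn (Continuous.continuousOn ?_)
  exact (continuous_ML ha b).comp (continuous_const.mul (Real.continuous_rpow_const ha.le))

lemma integral_pow_div_Gamma_mul_rpow_mul_sub_rpow {s : ℝ} (ha : 0 ≤ a) (hb : 0 < b) (hs : 0 < s)
    (ht : 0 < t) (ω : ℝ) (n : ℕ) :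
    ∫ u in (0 : ℝ)..t,
        (ω * u ^ a) ^ n / Real.Gamma (a * n + b) * (u ^ (b - 1) * (t - u) ^ (s - 1)) =
      Real.Gamma s * t ^ (b + s - 1) * ((ω * t ^ a) ^ n / Real.Gamma (a * n + (b + s))) := by
  have hpos : 0 < a * n + b := by positivity
  have rpow_pow_mul {v : ℝ} (hv : 0 < v) (r : ℝ) : (v ^ a) ^ n * v ^ r = v ^ (a * n + r) := by
    rw [Real.rpow_add hv, Real.rpow_mul hv.le, Real.rpow_natCast]
  have hmonomial : ∀ u ∈ Set.Ioc 0 t,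
      (ω * u ^ a) ^ n / Real.Gamma (a * n + b) * (u ^ (b - 1) * (t - u) ^ (s - 1)) =
        ω ^ n / Real.Gamma (a * n + b) * (u ^ (a * n + b - 1) * (t - u) ^ (s - 1)) := by
    intro u hu
    rw [add_sub_assoc, ← rpow_pow_mul hu.1]
    ring
  have hexponent : t ^ (a * n + b + s - 1) = (t ^ a) ^ n * t ^ (b + s - 1) := by
    rw [rpow_pow_mul ht, add_assoc, add_sub_assoc]
  have hΓ : Real.Gamma (a * n + b) ≠ 0 := (Real.Gamma_pos_of_pos hpos).ne'
  rw [integral_of_le ht.le, setIntegral_congr_fun measurableSet_Ioc hmonomial,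
    ← integral_of_le ht.le, intervalIntegral.integral_const_mul,
    integral_rpow_mul_sub_rpow hpos hs ht, hexponent, ← add_assoc, mul_pow]
  field_simp

lemma integral_sub_rpow_mul_rpow_mul_ML {s : ℝ} (ha : 0 < a) (hb : 0 < b) (hs : 0 < s)
    (ht : 0 < t) (ω : ℝ) :
    ∫ u in (0 : ℝ)..t, (t - u) ^ (s - 1) * (u ^ (b - 1) * ML a b (ω * u ^ a)) =
      Real.Gamma s * t ^ (b + s - 1) * ML a (b + s) (ω * t ^ a) := by
  have hbound : ∀ n : ℕ, ∀ u ∈ Set.uIoc 0 t, ‖(ω * u ^ a) ^ n / Real.Gamma (a * n + b)‖ ≤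
      ‖(ω * t ^ a) ^ n / Real.Gamma (a * n + b)‖ := by
    intro n u hu
    rw [Set.uIoc_of_le ht.le] at hu
    refine norm_pow_div_Gamma_le ?_ a b n
    rw [abs_mul, abs_mul, Real.abs_rpow_of_nonneg hu.1.le, Real.abs_rpow_of_nonneg ht.le]
    gcongr
    exacts [hu.1.le, hu.2]
  have hmeas (n : ℕ) : Measurable fun u : ℝ ↦ (ω * u ^ a) ^ n / Real.Gamma (a * n + b) := by
    fun_prop
  have hsum := hasSum_intervalIntegral_smul_of_norm_le
    (summable_pow_div_Gamma ha b (ω * t ^ a)).norm (fun n ↦ (hmeas n).aestronglyMeasurable)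
    hbound (intervalIntegrable_rpow_mul_sub_rpow hb hs ht)
  simp only [smul_eq_mul, integral_pow_div_Gamma_mul_rpow_mul_sub_rpow ha.le hb hs ht] at hsum
  rw [ML, ← tsum_mul_left, hsum.tsum_eq]
  refine integral_congr fun u _ ↦ ?_
  simp only [ML]
  ring

theorem hasSum_pow_mul_rpow_mul_ML (ha : 0 < a) (hb : 0 < b) (ht : 0 < t) (ν ω : ℝ) :
    HasSum (fun m : ℕ ↦ ν ^ m * t ^ (b + (m : ℝ)) * ML a (b + m + 1) (ω * t ^ a))
      (∫ u in (0 : ℝ)..t, Real.exp (ν * (t - u)) * (u ^ (b - 1) * ML a b (ω * u ^ a))) := by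
  have hsum := hasSum_intervalIntegral_pow_div_factorial_smul (φ := fun u ↦ ν * (t - u))
    (by fun_prop) (intervalIntegrable_rpow_mul_ML ha hb ω 0 t)
  simp only [smul_eq_mul] at hsum
  refine hsum.congr_fun fun m ↦ ?_
  have hRL := integral_sub_rpow_mul_rpow_mul_ML ha hb (s := m + 1) (by positivity) ht ω
  simp only [add_sub_cancel_right, Real.rpow_natCast, Real.Gamma_nat_eq_factorial,
    ← add_assoc] at hRL
  simp only [mul_pow, mul_div_right_comm, mul_assoc (ν ^ m / _),
    intervalIntegral.integral_const_mul, hRL]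
  field_simp

theorem integral_ML_eq_tsum_general (ha : 0 < a) (hb : 0 < b) (ht : 0 < t) (ν ω : ℝ) :
    IntegrableOn (fun u : ℝ => Real.exp (-ν * u) * u ^ (b - 1) * ML a b (ω * u ^ a))
        (Set.Ioc 0 t) ∧
    Summable (fun m : ℕ =>
        |ν ^ m * t ^ (b + (m : ℝ)) * ML a (b + m + 1) (ω * t ^ a)|) ∧
    ∫ u in (0 : ℝ)..t, Real.exp (-ν * u) * u ^ (b - 1) * ML a b (ω * u ^ a) =
      Real.exp (-ν * t) *
        ∑' m : ℕ, ν ^ m * t ^ (b + (m : ℝ)) * ML a (b + m + 1) (ω * t ^ a) := by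
  have hsum := hasSum_pow_mul_rpow_mul_ML ha hb ht ν ω
  have hexp (u : ℝ) : Real.exp (-ν * u) = Real.exp (-ν * t) * Real.exp (ν * (t - u)) := by
    rw [← Real.exp_add]
    ring_nf
  refine ⟨?_, hsum.summable.abs, ?_⟩
  · rw [← intervalIntegrable_iff_integrableOn_Ioc_of_le ht.le]
    simp only [mul_assoc]
    exact (intervalIntegrable_rpow_mul_ML ha hb ω 0 t).continuousOn_mul (by fun_prop)
  · rw [hsum.tsum_eq, ← intervalIntegral.integral_const_mul]
    refine integral_congr fun u _ ↦ ?_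
    simp only [hexp u, mul_assoc]

end MittagLeffler

/-- For `β ∈ (0,1)`, `ν ≥ 0`, `ω ∈ ℝ` and `t > 0`,
`∫_0^t e^{−ν u} u^{β−1} M_{β,β}(ω u^β) du = e^{−ν t} Σ_{m=0}^∞ ν^m t^{β+m} M_{β,β+m+1}(ω t^β)`,
where both the integral and the series converge absolutely. -/
theorem integral_ML_eq_tsum
    (β ν ω t : ℝ) (hβ : β ∈ Set.Ioo (0 : ℝ) 1) (hν : 0 ≤ ν) (ht : 0 < t) :
    IntegrableOn (fun u : ℝ => Real.exp (-ν * u) * u ^ (β - 1) * ML β β (ω * u ^ β))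
        (Set.Ioc 0 t) ∧
    Summable (fun m : ℕ =>
        |ν ^ m * t ^ (β + (m : ℝ)) * ML β (β + m + 1) (ω * t ^ β)|) ∧
    ∫ u in (0 : ℝ)..t, Real.exp (-ν * u) * u ^ (β - 1) * ML β β (ω * u ^ β) =
      Real.exp (-ν * t) *
        ∑' m : ℕ, ν ^ m * t ^ (β + (m : ℝ)) * ML β (β + m + 1) (ω * t ^ β) :=
  integral_ML_eq_tsum_general hβ.1 hβ.1 ht ν ω
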